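/- Let G be a graph and construct G' as follows: take V, a disjoint copy V' of V, replace each edge vw of G by a path of length 2d between v and w, and join each v ∈ V to its copy v' ∈ V' by a path of length d. If G has a dominating set D of size s, then b(G') ≤ s + 3d. -/

import Mathlib

/-- `G` can be burned in `b` steps: `V(G)` is covered by balls of radii `0, 1, ..., b-1`. -/
def burnable {V : Type*} (G : SimpleGraph V) (b : ℕ) : Prop :=
  ∃ c : Fin b → V, ∀ v, ∃ i : Fin b, G.dist (c i) v ≤ (i : ℕ)

/-- The burning number of `G`. -/
noncomputable def burningNumber {V : Type*} (G : SimpleGraph V) : ℕ :=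
  sInf {b | burnable G b}

/-- Vertex "names" for the domination-reduction graph `G'`: original vertices `V`,
internal vertices `(a, b, k)` of the length-`2d` path replacing an edge `ab` of `G`
(at position `k+1 ∈ {1, ..., 2d-1}` from `a`), and vertices `(w, j)` of the pendant
path of length `d` attached to `w` (at position `j+1 ∈ {1, ..., d}`; the copy `w'` of
`w` is `(w, d-1)`). -/
def DomVert (V : Type*) (d : ℕ) : Type _ :=
  V ⊕ (V × V × Fin (2 * d - 1)) ⊕ (V × Fin d)

/-- Only names corresponding to actual edges of `G` (oriented increasingly) are valid. -/
def domValid {V : Type*} [LT V] (G : SimpleGraph V) (d : ℕ) : DomVert V d → Prop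
  | .inl _ => True
  | .inr (.inl (a, b, _)) => G.Adj a b ∧ a < b
  | .inr (.inr _) => True

/-- The adjacency generating relation of `G'`: consecutive vertices along the subdivided
edges and along the pendant paths. -/
def domRel {V : Type*} [LT V] (G : SimpleGraph V) (d : ℕ) : DomVert V d → DomVert V d → Prop
  | .inl v, .inr (.inl (a, b, k)) =>
      G.Adj a b ∧ a < b ∧ ((v = a ∧ (k : ℕ) = 0) ∨ (v = b ∧ (k : ℕ) = 2 * d - 2))
  | .inr (.inl (a, b, k)), .inr (.inl (a', b', k')) =>
      a = a' ∧ b = b' ∧ G.Adj a b ∧ a < b ∧ ((k : ℕ) + 1 = (k' : ℕ) ∨ (k' : ℕ) + 1 = (k : ℕ))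
  | .inl v, .inr (.inr (w, j)) => v = w ∧ (j : ℕ) = 0
  | .inr (.inr (w, j)), .inr (.inr (w', j')) =>
      w = w' ∧ ((j : ℕ) + 1 = (j' : ℕ) ∨ (j' : ℕ) + 1 = (j : ℕ))
  | _, _ => False

/-- The domination-reduction graph `G'`: each edge of `G` is replaced by a path of length
`2d` and each vertex `v` of `G` is joined to its copy `v'` by a path of length `d`. -/
def domGraph {V : Type*} [LinearOrder V] (G : SimpleGraph V) (d : ℕ) :
    SimpleGraph {x : DomVert V d // domValid G d x} :=
  SimpleGraph.fromRel fun x y => domRel G d x.1 y.1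

/-- The original vertex `v ∈ V` as a vertex of `G'`. -/
def domOrig {V : Type*} [LinearOrder V] (G : SimpleGraph V) (d : ℕ) (v : V) :
    {x : DomVert V d // domValid G d x} :=
  ⟨.inl v, trivial⟩

/-- There is a walk of length at most `n` from `x` to `y`. -/
def walkWithin {W : Type*} (H : SimpleGraph W) (x y : W) (n : ℕ) : Prop :=
  ∃ p : H.Walk x y, p.length ≤ n

theorem walkWithin_trans {W : Type*} {H : SimpleGraph W} {x y z : W} {m n k : ℕ}
    (h1 : walkWithin H x y m) (h2 : walkWithin H y z n) (hk : m + n ≤ k) :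
    walkWithin H x z k := by
  obtain ⟨p, hp⟩ := h1
  obtain ⟨q, hq⟩ := h2
  refine ⟨p.append q, ?_⟩
  rw [SimpleGraph.Walk.length_append]
  omega

theorem walkWithin_adj {W : Type*} {H : SimpleGraph W} {x y : W} (h : H.Adj x y) :
    walkWithin H x y 1 := ⟨h.toWalk, by simp⟩

theorem walkWithin_symm {W : Type*} {H : SimpleGraph W} {x y : W} {n : ℕ}
    (h : walkWithin H x y n) : walkWithin H y x n := by
  obtain ⟨p, hp⟩ := h
  exact ⟨p.reverse, by simpa using hp⟩

theorem within_pend {V : Type*} [LinearOrder V] (G : SimpleGraph V) (d : ℕ) (w : V) (j : ℕ)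
    (hj : j < d) :
    walkWithin (domGraph G d) (domOrig G d w) ⟨.inr (.inr (w, ⟨j, hj⟩)), trivial⟩ (j + 1) := by
  induction j with
  | zero =>
    refine walkWithin_adj ⟨?_, Or.inl ⟨rfl, rfl⟩⟩
    intro h
    have := congrArg Subtype.val h
    cases this
  | succ j ih =>
    refine walkWithin_trans (ih (by omega)) (walkWithin_adj ⟨?_, Or.inl ⟨rfl, Or.inl rfl⟩⟩) le_rfl
    intro h
    have := congrArg Subtype.val h
    injection this with h1
    injection h1 with h2
    injection h2 with h3 h4
    simp at h4

theorem within_left {V : Type*} [LinearOrder V] (G : SimpleGraph V) (d : ℕ) (a b : V)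
    (hab : G.Adj a b ∧ a < b) (j : ℕ) (hj : j < 2 * d - 1) :
    walkWithin (domGraph G d) (domOrig G d a) ⟨.inr (.inl (a, b, ⟨j, hj⟩)), hab⟩ (j + 1) := by
  induction j with
  | zero =>
    refine walkWithin_adj ⟨?_, Or.inl ⟨hab.1, hab.2, Or.inl ⟨rfl, rfl⟩⟩⟩
    intro h
    have := congrArg Subtype.val h
    cases this
  | succ j ih =>
    refine walkWithin_trans (ih (by omega))
      (walkWithin_adj ⟨?_, Or.inl ⟨rfl, rfl, hab.1, hab.2, Or.inl rfl⟩⟩) le_rfl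
    intro h
    have := congrArg Subtype.val h
    injection this with h1
    injection h1 with h2
    injection h2 with h3 h4
    simp at h4

theorem within_right {V : Type*} [LinearOrder V] (G : SimpleGraph V) (d : ℕ) (a b : V)
    (hab : G.Adj a b ∧ a < b) (m : ℕ) : ∀ (j : ℕ) (hj : j < 2 * d - 1), j + m = 2 * d - 2 →
    walkWithin (domGraph G d) (domOrig G d b) ⟨.inr (.inl (a, b, ⟨j, hj⟩)), hab⟩ (m + 1) := by
  induction m with
  | zero =>
    intro j hj hm
    refine walkWithin_adj ⟨?_, Or.inl ⟨hab.1, hab.2, Or.inr ⟨rfl, hm⟩⟩⟩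
    intro h
    have := congrArg Subtype.val h
    cases this
  | succ m ih =>
    intro j hj hm
    refine walkWithin_trans (ih (j + 1) (by omega) (by omega))
      (walkWithin_adj ⟨?_, Or.inl ⟨rfl, rfl, hab.1, hab.2, Or.inr rfl⟩⟩) le_rfl
    intro h
    have := congrArg Subtype.val h
    injection this with h1
    injection h1 with h2
    injection h2 with h3 h4
    simp at h4

theorem within_edge {V : Type*} [LinearOrder V] (G : SimpleGraph V) (d : ℕ) (hd : 0 < d)
    (a b : V) (hab : G.Adj a b) :
    walkWithin (domGraph G d) (domOrig G d a) (domOrig G d b) (2 * d) := by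
  have key : ∀ a b : V, G.Adj a b ∧ a < b →
      walkWithin (domGraph G d) (domOrig G d a) (domOrig G d b) (2 * d) := by
    intro a b h
    exact walkWithin_trans (within_left G d a b h 0 (by omega))
      (walkWithin_symm (within_right G d a b h (2 * d - 2) 0 (by omega) (by omega))) (by omega)
  rcases lt_or_gt_of_ne hab.ne with h | h
  · exact key a b ⟨hab, h⟩
  · exact walkWithin_symm (key b a ⟨hab.symm, h⟩)

/-- Every vertex of `G'` is within distance `d` of an original vertex. -/
theorem within_orig {V : Type*} [LinearOrder V] (G : SimpleGraph V) (d : ℕ)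
    (x : {x : DomVert V d // domValid G d x}) :
    ∃ v, walkWithin (domGraph G d) (domOrig G d v) x d := by
  obtain ⟨x | ⟨a, b, k, hk⟩ | ⟨w, j, hj⟩, hx⟩ := x
  · exact ⟨x, SimpleGraph.Walk.nil, Nat.zero_le _⟩
  · by_cases h : k + 1 ≤ d
    · obtain ⟨p, hp⟩ := within_left G d a b hx k hk
      exact ⟨a, p, hp.trans h⟩
    · obtain ⟨p, hp⟩ := within_right G d a b hx (2 * d - 2 - k) k hk (by omega)
      exact ⟨b, p, hp.trans (by omega)⟩
  · obtain ⟨p, hp⟩ := within_pend G d w j hj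
    exact ⟨w, p, hp.trans hj⟩

/-- Every vertex of `G'` is within distance `3d` of the dominating set. -/
theorem within_dom {V : Type*} [LinearOrder V] (G : SimpleGraph V) (d : ℕ) (hd : 0 < d)
    (D : Finset V) (hdom : ∀ v : V, ∃ u ∈ D, u = v ∨ G.Adj u v)
    (x : {x : DomVert V d // domValid G d x}) :
    ∃ u ∈ D, walkWithin (domGraph G d) (domOrig G d u) x (3 * d) := by
  obtain ⟨v, hv⟩ := within_orig G d x
  obtain ⟨u, hu, rfl | h⟩ := hdom v
  · obtain ⟨p, hp⟩ := hv
    exact ⟨u, hu, p, by omega⟩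
  · exact ⟨u, hu, walkWithin_trans (within_edge G d hd u v h) hv (by omega)⟩

/-- if `G` has a dominating set of size `s`, then `b(G') ≤ s + 3d`. -/
theorem stmt_9 {V : Type*} [Fintype V] [LinearOrder V] (G : SimpleGraph V)
    (d : ℕ) (hd : 0 < d) (D : Finset V) (s : ℕ) (hcard : D.card = s)
    (hdom : ∀ v : V, ∃ u ∈ D, u = v ∨ G.Adj u v) :
    burningNumber (domGraph G d) ≤ s + 3 * d := by
  subst hcard
  unfold burningNumber
  rcases isEmpty_or_nonempty V with hV | ⟨⟨v0⟩⟩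
  · refine (Nat.sInf_le (m := 0) ?_).trans (Nat.zero_le _)
    refine ⟨fun i => i.elim0, fun x => ?_⟩
    obtain ⟨v, -⟩ := within_orig G d x
    exact hV.elim v
  · refine Nat.sInf_le ?_
    refine ⟨fun i => if h : 3 * d ≤ (i : ℕ) then
      domOrig G d (D.equivFin.symm ⟨i - 3 * d, by omega⟩).1 else domOrig G d v0, fun x => ?_⟩
    obtain ⟨u, hu, p, hp⟩ := within_dom G d hd D hdom x
    refine ⟨⟨3 * d + D.equivFin ⟨u, hu⟩, by omega⟩, ?_⟩
    simp only [Nat.le_add_right, dite_true, Nat.add_sub_cancel_left, Fin.eta,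
      Equiv.symm_apply_apply]
    exact (SimpleGraph.dist_le p).trans (by omega)
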